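/- Lipschitz continuity of the limiting projection in its second argument: let Σ be a symmetric positive definite real p×p matrix and β ∈ Q, and let Θ_{Q,Σ}(β, x) = lim_{n→∞} (P_{Q,Σ}(nβ + x) − nβ), which exists for every x ∈ ℝ^p. Then for all x, y ∈ ℝ^p, (Θ_{Q,Σ}(β,x) − Θ_{Q,Σ}(β,y))ᵀ Σ (Θ_{Q,Σ}(β,x) − Θ_{Q,Σ}(β,y)) ≤ (x − y)ᵀ Σ (x − y); in particular x ↦ Θ_{Q,Σ}(β, x) is continuous. -/

import Mathlib

open Matrix

/-- The metric projection `P_{C,Σ}(x) = argmin_{β ∈ C} (β - x)ᵀ Σ (β - x)`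
(chosen via the axiom of choice; for `Σ` positive definite and `C` nonempty
closed convex it is the unique minimizer). -/
noncomputable def metricProj {p : ℕ} (S : Matrix (Fin p) (Fin p) ℝ)
    (C : Set (Fin p → ℝ)) (x : Fin p → ℝ) : Fin p → ℝ :=
  Classical.epsilon fun γ => γ ∈ C ∧ ∀ β ∈ C,
    (γ - x) ⬝ᵥ S.mulVec (γ - x) ≤ (β - x) ⬝ᵥ S.mulVec (β - x)

/-- The constraint cone `Q = {β ∈ ℝ^p : β_j ≥ 0 for j = 1,…,q}`. -/
def coneQ (p q : ℕ) : Set (Fin p → ℝ) :=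
  {v | ∀ j : Fin p, (j : ℕ) < q → 0 ≤ v j}

/-!
Write `Σ = AᵀA` with `A` invertible. Then `v ↦ A v` carries the quadratic form of `Σ` to the squared
Euclidean norm, so `P_{C,Σ}` becomes the Euclidean nearest-point map onto a closed convex set, which
is nonexpansive by its variational inequality. The translations by `nβ` cancel in
`P_{Q,Σ}(nβ + x) - P_{Q,Σ}(nβ + y)`, so the bound passes to the limit.
-/

section NearestPoint

variable {E : Type*} [NormedAddCommGroup E] [InnerProductSpace ℝ E] {K : Set E}

theorem real_inner_sub_sub_nonpos_of_isMinOn (hK : Convex ℝ K) {u v w : E} (hv : v ∈ K)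
    (hmin : IsMinOn (fun z => ‖z - u‖) K v) (hw : w ∈ K) :
    inner ℝ (u - v) (w - v) ≤ 0 := by
  simp only [norm_sub_rev _ u] at hmin
  exact (norm_eq_iInf_iff_real_inner_le_zero hK hv).1 (hmin.iInf_eq hv).symm w hw

theorem norm_sub_le_norm_sub_of_isMinOn (hK : Convex ℝ K) {u₁ u₂ v₁ v₂ : E}
    (hv₁ : v₁ ∈ K) (hmin₁ : IsMinOn (fun z => ‖z - u₁‖) K v₁)
    (hv₂ : v₂ ∈ K) (hmin₂ : IsMinOn (fun z => ‖z - u₂‖) K v₂) :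
    ‖v₁ - v₂‖ ≤ ‖u₁ - u₂‖ := by
  have variational₁ : inner ℝ (u₁ - v₁) (v₂ - v₁) ≤ 0 :=
    real_inner_sub_sub_nonpos_of_isMinOn hK hv₁ hmin₁ hv₂
  have variational₂ : inner ℝ (u₂ - v₂) (v₁ - v₂) ≤ 0 :=
    real_inner_sub_sub_nonpos_of_isMinOn hK hv₂ hmin₂ hv₁
  have inner_sum : inner ℝ (u₁ - u₂) (v₁ - v₂) = ‖v₁ - v₂‖ ^ 2
      - inner ℝ (u₁ - v₁) (v₂ - v₁) - inner ℝ (u₂ - v₂) (v₁ - v₂) := by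
    rw [← neg_sub v₁ v₂, inner_neg_right, ← real_inner_self_eq_norm_sq, sub_neg_eq_add,
      ← inner_add_left, ← inner_sub_left]
    congr 1
    abel
  have mul_self_le : ‖v₁ - v₂‖ * ‖v₁ - v₂‖ ≤ ‖u₁ - u₂‖ * ‖v₁ - v₂‖ := by
    linarith [real_inner_le_norm (u₁ - u₂) (v₁ - v₂)]
  by_contra! hlt
  exact mul_self_le.not_gt (mul_lt_mul_of_pos_right hlt ((norm_nonneg _).trans_lt hlt))

end NearestPoint

section QuadraticForm

variable {n : Type*} [Fintype n] {S : Matrix n n ℝ}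

open scoped MatrixOrder in
theorem exists_continuousLinearEquiv_dotProduct_mulVec_eq_norm_sq (hS : S.PosDef) :
    ∃ T : (n → ℝ) ≃L[ℝ] EuclideanSpace ℝ n, ∀ v, v ⬝ᵥ S *ᵥ v = ‖T v‖ ^ 2 := by
  classical
  obtain ⟨A, hA, rfl⟩ :=
    CStarAlgebra.isStrictlyPositive_iff_eq_star_mul_self.mp hS.isStrictlyPositive
  let T : (n → ℝ) ≃L[ℝ] EuclideanSpace ℝ n :=
    (A.toLinearEquiv' hA.invertible).toContinuousLinearEquiv.trans (EuclideanSpace.equiv n ℝ).symm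
  refine ⟨T, fun v => ?_⟩
  calc v ⬝ᵥ (star A * A) *ᵥ v = A *ᵥ v ⬝ᵥ A *ᵥ v := by
        rw [← mulVec_mulVec, dotProduct_mulVec, star_eq_conjTranspose,
          conjTranspose_eq_transpose_of_trivial, vecMul_transpose]
    _ = ‖WithLp.toLp 2 (A *ᵥ v)‖ ^ 2 := by
        rw [EuclideanSpace.real_norm_sq_eq]
        simp only [dotProduct, sq]
    _ = ‖T v‖ ^ 2 := rfl

theorem continuous_of_dotProduct_mulVec_sub_le (hS : S.PosDef) {f : (n → ℝ) → n → ℝ}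
    (hf : ∀ x y, (f x - f y) ⬝ᵥ S *ᵥ (f x - f y) ≤ (x - y) ⬝ᵥ S *ᵥ (x - y)) :
    Continuous f := by
  obtain ⟨T, hT⟩ := exists_continuousLinearEquiv_dotProduct_mulVec_eq_norm_sq hS
  have lipschitz : LipschitzWith 1 (T ∘ f ∘ T.symm) := LipschitzWith.of_dist_le_mul fun u v => by
    simpa [hT, dist_eq_norm, sq_le_sq₀] using hf (T.symm u) (T.symm v)
  simpa [Function.comp_def] using T.symm.continuous.comp (lipschitz.continuous.comp T.continuous)

end QuadraticForm

section MetricProj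

variable {p : ℕ} {S : Matrix (Fin p) (Fin p) ℝ} {C : Set (Fin p → ℝ)}

theorem metricProj_mem_and_isMinOn (hS : S.PosDef) (hclosed : IsClosed C) (hne : C.Nonempty)
    (x : Fin p → ℝ) :
    metricProj S C x ∈ C ∧
      IsMinOn (fun γ => (γ - x) ⬝ᵥ S *ᵥ (γ - x)) C (metricProj S C x) := by
  refine Classical.epsilon_spec (p := fun γ => γ ∈ C ∧ ∀ β ∈ C,
    (γ - x) ⬝ᵥ S *ᵥ (γ - x) ≤ (β - x) ⬝ᵥ S *ᵥ (β - x)) ?_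
  obtain ⟨T, hT⟩ := exists_continuousLinearEquiv_dotProduct_mulVec_eq_norm_sq hS
  obtain ⟨_, ⟨γ, hγ, rfl⟩, hdist⟩ :=
    (T.toHomeomorph.isClosed_image.2 hclosed).exists_infDist_eq_dist (hne.image T) (T x)
  refine ⟨γ, hγ, fun β hβ => ?_⟩
  have dist_le : dist (T x) (T γ) ≤ dist (T x) (T β) :=
    hdist.symm.trans_le (Metric.infDist_le_dist_of_mem (Set.mem_image_of_mem T hβ))
  rw [dist_eq_norm_sub', dist_eq_norm_sub', ← map_sub, ← map_sub] at dist_le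
  simpa only [hT] using pow_le_pow_left₀ (norm_nonneg _) dist_le 2

theorem dotProduct_mulVec_metricProj_sub_le (hS : S.PosDef) (hconv : Convex ℝ C)
    (hclosed : IsClosed C) (hne : C.Nonempty) (x y : Fin p → ℝ) :
    (metricProj S C x - metricProj S C y) ⬝ᵥ S *ᵥ (metricProj S C x - metricProj S C y) ≤
      (x - y) ⬝ᵥ S *ᵥ (x - y) := by
  obtain ⟨T, hT⟩ := exists_continuousLinearEquiv_dotProduct_mulVec_eq_norm_sq hS
  have nearest (z : Fin p → ℝ) :
      IsMinOn (fun w => ‖w - T z‖) (T '' C) (T (metricProj S C z)) := by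
    rintro _ ⟨γ, hγ, rfl⟩
    have form_le := (metricProj_mem_and_isMinOn hS hclosed hne z).2 hγ
    simpa [hT, sq_le_sq₀] using form_le
  have mem (z : Fin p → ℝ) : T (metricProj S C z) ∈ T '' C :=
    Set.mem_image_of_mem T (metricProj_mem_and_isMinOn hS hclosed hne z).1
  have image_convex : Convex ℝ (T '' C) := hconv.linear_image T.toLinearMap
  simp only [hT, map_sub]
  exact pow_le_pow_left₀ (norm_nonneg _) (norm_sub_le_norm_sub_of_isMinOn image_convex
    (mem x) (nearest x) (mem y) (nearest y)) 2

theorem limiting_projection_lipschitz_general {ι : Type*} {l : Filter ι} [l.NeBot]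
    (hS : S.PosDef) (hconv : Convex ℝ C) (hclosed : IsClosed C) (hne : C.Nonempty)
    (b : ι → Fin p → ℝ) {Θ : (Fin p → ℝ) → Fin p → ℝ}
    (hΘ : ∀ x, Filter.Tendsto (fun i => metricProj S C (b i + x) - b i) l (nhds (Θ x))) :
    (∀ x y, (Θ x - Θ y) ⬝ᵥ S *ᵥ (Θ x - Θ y) ≤ (x - y) ⬝ᵥ S *ᵥ (x - y)) ∧ Continuous Θ := by
  suffices lipschitz : ∀ x y, (Θ x - Θ y) ⬝ᵥ S *ᵥ (Θ x - Θ y) ≤ (x - y) ⬝ᵥ S *ᵥ (x - y) from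
    ⟨lipschitz, continuous_of_dotProduct_mulVec_sub_le hS lipschitz⟩
  intro x y
  have form_continuous : Continuous fun v : Fin p → ℝ => v ⬝ᵥ S *ᵥ v := by fun_prop
  refine le_of_tendsto' ((form_continuous.tendsto _).comp ((hΘ x).sub (hΘ y))) fun i => ?_
  simpa only [Function.comp_apply, sub_sub_sub_cancel_right, add_sub_add_left_eq_sub] using
    dotProduct_mulVec_metricProj_sub_le hS hconv hclosed hne (b i + x) (b i + y)

end MetricProj

theorem convex_coneQ (p q : ℕ) : Convex ℝ (coneQ p q) := by
  intro u hu v hv a b ha hb _ j hj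
  exact add_nonneg (mul_nonneg ha (hu j hj)) (mul_nonneg hb (hv j hj))

theorem isClosed_coneQ (p q : ℕ) : IsClosed (coneQ p q) := by
  simp only [coneQ, Set.ofPred_forall]
  exact isClosed_iInter fun j => isClosed_iInter fun _ =>
    isClosed_le continuous_const (continuous_apply j)

/-- Lipschitz continuity of the limiting projection
`Θ_{Q,Σ}(β,·)` in its second argument, and continuity of `Θ_{Q,Σ}(β,·)`. -/
theorem limiting_projection_lipschitz {p q : ℕ} (hq : 1 ≤ q) (hqp : q ≤ p)
    (S : Matrix (Fin p) (Fin p) ℝ) (hsymm : S.IsSymm) (hpd : S.PosDef)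
    (β : Fin p → ℝ) (hβ : β ∈ coneQ p q)
    (Θ : (Fin p → ℝ) → (Fin p → ℝ))
    (hΘ : ∀ x : Fin p → ℝ,
      Filter.Tendsto
        (fun n : ℕ => metricProj S (coneQ p q) ((n : ℝ) • β + x) - (n : ℝ) • β)
        Filter.atTop (nhds (Θ x))) :
    (∀ x y : Fin p → ℝ,
      (Θ x - Θ y) ⬝ᵥ S.mulVec (Θ x - Θ y) ≤ (x - y) ⬝ᵥ S.mulVec (x - y)) ∧
    Continuous Θ :=
  limiting_projection_lipschitz_general hpd (convex_coneQ p q) (isClosed_coneQ p q) ⟨β, hβ⟩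
    (fun n : ℕ => (n : ℝ) • β) hΘ
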